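/- For every integer k ≥ 0, ∫_{−1}^{1} (2 − 2t)^{3/2} P_k''(t) dt = 8(−1)^k · binom(k+1, 2) + 3·(2(−1)^{k+1} + 2/(2k+1)). -/

import Mathlib

/-- `C` is the family of Gegenbauer (ultraspherical) polynomials with parameter `α`,
characterized by the generating function `(1 - 2rt + r²)^(-α) = Σ_k C_k^α(t) r^k`
for `t ∈ [-1, 1]` and `|r|` small. -/
def IsGegenbauer (α : ℝ) (C : ℕ → Polynomial ℝ) : Prop :=
  ∀ t ∈ Set.Icc (-1:ℝ) 1, ∀ r : ℝ, |r| < 1/2 →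
    HasSum (fun k : ℕ => (C k).eval t * r ^ k) ((1 - 2*r*t + r^2) ^ (-α))

/-- The Legendre polynomials are the Gegenbauer polynomials with parameter `1/2`. -/
def IsLegendre (P : ℕ → Polynomial ℝ) : Prop := IsGegenbauer (1/2) P

/-!
Differentiating `(1 - 2rt + r²)^(-α)` in `r` gives a linear differential equation for the generating
function. Its coefficients are the three-term recurrence, from which the derivative relations of the
polynomials follow by induction. Integrating by parts twice reduces the integral to the values of
`P_k` and its derivative at `-1` and to the integral of `(2 - 2t)^(-1/2) P_k`. The latter obeys a
one-step recurrence in `k`: `(1 - t) d/dt (P_k + P_{k+1}) = (k + 1) (P_k - P_{k+1})`, and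
integrating this by parts leaves no boundary term, since `P_k + P_{k+1}` vanishes at `-1`.
-/

open Filter MeasureTheory Set Topology
open Polynomial (C X derivative)
open scoped Polynomial PowerSeries Interval

section MaclaurinSeries

variable {𝕜 : Type*} [RCLike 𝕜] {f g : 𝕜 → 𝕜} {A B : 𝕜⟦X⟧}

/-- The formal power series `A` converges to `f` on a neighbourhood of `0`. This is
`HasFPowerSeriesAt f _ 0` in terms of `PowerSeries`, whose ring structure and formal derivative
are used to compare coefficients. -/
def HasMaclaurinSeries (f : 𝕜 → 𝕜) (A : 𝕜⟦X⟧) : Prop :=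
  ∀ᶠ z in 𝓝 0, HasSum (fun n => A.coeff n * z ^ n) (f z)

lemma hasMaclaurinSeries_iff_hasFPowerSeriesAt :
    HasMaclaurinSeries f A ↔
      HasFPowerSeriesAt f (FormalMultilinearSeries.ofScalars 𝕜 fun n => A.coeff n) 0 := by
  simp only [HasMaclaurinSeries, hasFPowerSeriesAt_iff, FormalMultilinearSeries.coeff_ofScalars,
    smul_eq_mul, zero_add, mul_comm]

namespace HasMaclaurinSeries

lemma congr (hf : HasMaclaurinSeries f A) (hfg : f =ᶠ[𝓝 0] g) : HasMaclaurinSeries g A := by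
  filter_upwards [hf, hfg] with z hz hfgz
  rwa [← hfgz]

lemma unique (hA : HasMaclaurinSeries f A) (hB : HasMaclaurinSeries f B) : A = B := by
  rw [hasMaclaurinSeries_iff_hasFPowerSeriesAt] at hA hB
  have hcoeff := FormalMultilinearSeries.ofScalars_series_injective 𝕜 𝕜
    (hA.eq_formalMultilinearSeries hB)
  exact PowerSeries.ext (congrFun hcoeff)

lemma coeff_zero (hf : HasMaclaurinSeries f A) : A.coeff 0 = f 0 := by
  have h0 : HasSum (fun n => A.coeff n * 0 ^ n) (A.coeff 0) := by
    simpa only [smul_eq_mul, mul_comm] using HasSum.hasSum_at_zero (𝕜 := 𝕜) fun n => A.coeff n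
  simpa using h0.unique hf.self_of_nhds

lemma mul (hf : HasMaclaurinSeries f A) (hg : HasMaclaurinSeries g B) :
    HasMaclaurinSeries (fun z => f z * g z) (A * B) := by
  filter_upwards [hf, hg] with z hfz hgz
  have hA := hfz.summable.norm
  have hB := hgz.summable.norm
  have hAB := (summable_norm_sum_mul_antidiagonal_of_summable_norm hA hB).of_norm.hasSum
  rw [← tsum_mul_tsum_eq_tsum_sum_antidiagonal_of_summable_norm hA hB, hfz.tsum_eq,
    hgz.tsum_eq] at hAB
  refine hAB.congr_fun fun n => ?_
  rw [PowerSeries.coeff_mul, Finset.sum_mul]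
  refine Finset.sum_congr rfl fun p hp => ?_
  rw [← Finset.HasAntidiagonal.mem_antidiagonal.1 hp, pow_add, mul_mul_mul_comm]

lemma polynomial (p : 𝕜[X]) :
    HasMaclaurinSeries (fun z => p.eval z) (p : 𝕜⟦X⟧) := by
  refine .of_forall fun z => ?_
  simp only [Polynomial.coeff_coe, Polynomial.eval_eq_sum, Polynomial.sum_def]
  refine hasSum_sum_of_ne_finset_zero fun n hn => ?_
  rw [Polynomial.notMem_support_iff.1 hn, zero_mul]

protected lemma deriv (hf : HasMaclaurinSeries f A) :
    HasMaclaurinSeries (deriv f) (PowerSeries.derivative 𝕜 A) := by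
  obtain ⟨ρ, hρ⟩ := hasMaclaurinSeries_iff_hasFPowerSeriesAt.1 hf
  filter_upwards [hasFPowerSeriesAt_iff.1 hρ.fderiv.hasFPowerSeriesAt] with z hz
  have hz1 := hz.mapL (ContinuousLinearMap.apply 𝕜 𝕜 1)
  simpa [PowerSeries.coeff_derivative, mul_comm, mul_left_comm] using hz1

end HasMaclaurinSeries

end MaclaurinSeries

lemma coeff_X_mul_derivative {R : Type*} [CommSemiring R] (A : R⟦X⟧) (n : ℕ) :
    (PowerSeries.X * PowerSeries.derivative R A).coeff n = n * A.coeff n := by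
  cases n with
  | zero => simp
  | succ n => simp [PowerSeries.coeff_succ_X_mul, PowerSeries.coeff_derivative, mul_comm]

lemma polynomial_eq_of_eqOn_Icc {a b : ℝ} (hab : a < b) {p q : ℝ[X]}
    (h : ∀ t ∈ Icc a b, p.eval t = q.eval t) : p = q :=
  p.eq_of_infinite_eval_eq q ((Icc_infinite hab).mono h)

lemma one_sub_two_mul_add_sq_pos {r t : ℝ} (ht : t ∈ Icc (-1 : ℝ) 1) (hr : |r| < 1) :
    0 < 1 - 2 * r * t + r ^ 2 := by
  obtain ⟨hr₁, hr₂⟩ := abs_lt.1 hr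
  have ht' : t ^ 2 ≤ 1 := by nlinarith [ht.1, ht.2]
  rcases eq_or_ne r t with rfl | hne
  · nlinarith
  · nlinarith [sq_pos_of_ne_zero (sub_ne_zero.2 hne)]

lemma one_sub_two_mul_add_sq_mul_deriv_rpow {r t α : ℝ} (hw : 1 - 2 * r * t + r ^ 2 ≠ 0) :
    (1 - 2 * r * t + r ^ 2) * deriv (fun r => (1 - 2 * r * t + r ^ 2) ^ (-α)) r =
      2 * α * (t - r) * (1 - 2 * r * t + r ^ 2) ^ (-α) := by
  have hderiv : HasDerivAt (fun r : ℝ => 1 - 2 * r * t + r ^ 2) (2 * (r - t)) r := by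
    have := ((((hasDerivAt_id r).const_mul 2).mul_const t).const_sub 1).add (hasDerivAt_pow 2 r)
    exact this.congr_deriv (by norm_num; ring)
  rw [(hderiv.rpow_const (Or.inl hw)).deriv, Real.rpow_sub_one hw]
  generalize 1 - 2 * r * t + r ^ 2 = w at hw ⊢
  field_simp
  ring

/-- The formal generating series `∑ Gₙ(t) rⁿ` in `r` of a sequence of polynomials, at a fixed
argument `t`. -/
noncomputable def generatingSeries {R : Type*} [Semiring R] (G : ℕ → R[X]) (t : R) : R⟦X⟧ :=
  PowerSeries.mk fun n => (G n).eval t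

lemma coeff_generatingSeries {R : Type*} [Semiring R] (G : ℕ → R[X]) (t : R) (n : ℕ) :
    (generatingSeries G t).coeff n = (G n).eval t :=
  PowerSeries.coeff_mk n _

namespace IsGegenbauer

variable {α : ℝ} {G : ℕ → ℝ[X]} (hG : IsGegenbauer α G)

section GeneratingFunction

variable {t : ℝ} (ht : t ∈ Icc (-1 : ℝ) 1)
include hG ht

lemma hasMaclaurinSeries :
    HasMaclaurinSeries (fun r => (1 - 2 * r * t + r ^ 2) ^ (-α)) (generatingSeries G t) := by
  filter_upwards [Metric.ball_mem_nhds (0 : ℝ) one_half_pos] with r hr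
  simpa only [coeff_generatingSeries] using hG t ht r (by simpa using hr)

lemma generatingSeries_differential_equation :
    PowerSeries.derivative ℝ (generatingSeries G t) -
        PowerSeries.C (2 * t) * (PowerSeries.X * PowerSeries.derivative ℝ (generatingSeries G t)) +
        PowerSeries.X * (PowerSeries.X * PowerSeries.derivative ℝ (generatingSeries G t)) =
      PowerSeries.C (2 * α * t) * generatingSeries G t -
        PowerSeries.C (2 * α) * (PowerSeries.X * generatingSeries G t) := by
  have hF := hG.hasMaclaurinSeries ht
  have hleft := (HasMaclaurinSeries.polynomial (1 - C (2 * t) * X + X ^ 2)).mul hF.deriv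
  have hright := (HasMaclaurinSeries.polynomial (C (2 * α) * (C t - X))).mul hF
  have hode := hleft.unique (hright.congr ?_)
  · simp only [Polynomial.coe_add, Polynomial.coe_sub, Polynomial.coe_mul, Polynomial.coe_pow,
      Polynomial.coe_C, Polynomial.coe_X, Polynomial.coe_one] at hode
    rw [map_mul _ (2 * α)]
    linear_combination hode
  filter_upwards [Metric.ball_mem_nhds (0 : ℝ) one_pos] with r hr
  have hderiv := one_sub_two_mul_add_sq_mul_deriv_rpow (α := α)
    (one_sub_two_mul_add_sq_pos ht (by simpa using hr)).ne'
  have heval : (1 - C (2 * t) * X + X ^ 2).eval r = 1 - 2 * r * t + r ^ 2 := by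
    simp only [Polynomial.eval_add, Polynomial.eval_sub, Polynomial.eval_mul, Polynomial.eval_pow,
      Polynomial.eval_C, Polynomial.eval_X, Polynomial.eval_one]
    ring
  rw [heval, hderiv]
  simp

end GeneratingFunction

include hG

lemma zero_eq : G 0 = 1 := by
  refine polynomial_eq_of_eqOn_Icc (by norm_num : (-1 : ℝ) < 1) fun t ht => ?_
  have h0 := (hG.hasMaclaurinSeries ht).coeff_zero
  rw [coeff_generatingSeries] at h0
  simpa using h0

lemma one_eq : G 1 = C (2 * α) * X := by
  refine polynomial_eq_of_eqOn_Icc (by norm_num : (-1 : ℝ) < 1) fun t ht => ?_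
  have h0 := congrArg (PowerSeries.coeff 0) (hG.generatingSeries_differential_equation ht)
  simp only [map_add, map_sub, PowerSeries.coeff_C_mul, PowerSeries.coeff_zero_X_mul,
    PowerSeries.coeff_derivative, coeff_generatingSeries, hG.zero_eq] at h0
  simpa using h0

lemma add_two_recurrence (n : ℕ) :
    ((n : ℝ[X]) + 2) * G (n + 2) = (2 * ((n : ℝ[X]) + 1) + C (2 * α)) * X * G (n + 1) -
      ((n : ℝ[X]) + C (2 * α)) * G n := by
  refine polynomial_eq_of_eqOn_Icc (by norm_num : (-1 : ℝ) < 1) fun t ht => ?_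
  have hcoeff := congrArg (PowerSeries.coeff (n + 1))
    (hG.generatingSeries_differential_equation ht)
  simp only [map_add, map_sub, PowerSeries.coeff_C_mul, PowerSeries.coeff_succ_X_mul,
    coeff_X_mul_derivative, PowerSeries.coeff_derivative, coeff_generatingSeries] at hcoeff
  push_cast at hcoeff
  simp only [Polynomial.eval_mul, Polynomial.eval_add, Polynomial.eval_sub, Polynomial.eval_C,
    Polynomial.eval_X, Polynomial.eval_natCast, Polynomial.eval_ofNat, Polynomial.eval_one]
  linear_combination hcoeff

lemma derivative_succ_and_X_mul_derivative_succ (n : ℕ) :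
    (G (n + 1)).derivative = X * (G n).derivative + ((n : ℝ[X]) + C (2 * α)) * G n ∧
      X * (G (n + 1)).derivative = (G n).derivative + ((n : ℝ[X]) + 1) * G (n + 1) := by
  induction n with
  | zero => simp [hG.zero_eq, hG.one_eq, mul_comm]
  | succ n ih =>
    obtain ⟨ihD, ihX⟩ := ih
    have hrec := hG.add_two_recurrence n
    have hrec' := congrArg derivative hrec
    simp only [Polynomial.derivative_mul, Polynomial.derivative_add, Polynomial.derivative_sub,
      Polynomial.derivative_natCast, Polynomial.derivative_ofNat, Polynomial.derivative_C,
      Polynomial.derivative_X, Polynomial.derivative_one] at hrec'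
    have hD : (G (n + 2)).derivative =
        X * (G (n + 1)).derivative + ((n : ℝ[X]) + 1 + C (2 * α)) * G (n + 1) := by
      have hne : ((n : ℝ[X]) + 2) ≠ 0 := by exact_mod_cast (n + 1).succ_ne_zero
      apply mul_left_cancel₀ hne
      linear_combination hrec' + ((n : ℝ[X]) + C (2 * α)) * ihX
    push_cast
    exact ⟨hD, by linear_combination X * hD - hrec + X * ihX - ihD⟩

lemma one_sub_X_mul_derivative_add_succ (n : ℕ) :
    (1 - X) * (G n + G (n + 1)).derivative =
      ((n : ℝ[X]) + C (2 * α)) * G n - ((n : ℝ[X]) + 1) * G (n + 1) := by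
  obtain ⟨hD, hX⟩ := hG.derivative_succ_and_X_mul_derivative_succ n
  rw [Polynomial.derivative_add]
  linear_combination hD - hX

lemma one_add_X_mul_derivative_succ_sub (n : ℕ) :
    (1 + X) * (G (n + 1) - G n).derivative =
      ((n : ℝ[X]) + C (2 * α)) * G n + ((n : ℝ[X]) + 1) * G (n + 1) := by
  obtain ⟨hD, hX⟩ := hG.derivative_succ_and_X_mul_derivative_succ n
  rw [Polynomial.derivative_sub]
  linear_combination hD + hX

end IsGegenbauer

section WeightedIntegral

variable {a b c d s : ℝ}

lemma intervalIntegrable_sub_mul_rpow (hs : -1 < s) :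
    IntervalIntegrable (fun t => (c - d * t) ^ s) volume a b := by
  rcases eq_or_ne d 0 with rfl | hd
  · simp
  have h := ((intervalIntegral.intervalIntegrable_rpow' hs
    (a := c - d * a) (b := c - d * b)).comp_sub_left c).comp_mul_left (c := d)
  simpa [hd] using h

lemma integral_sub_mul_rpow_mul_deriv (hs : 0 < s)
    (hne : ∀ t ∈ Ioo (min a b) (max a b), c - d * t ≠ 0) {f f' : ℝ → ℝ}
    (hf : ∀ t ∈ [[a, b]], HasDerivAt f (f' t) t) (hf' : IntervalIntegrable f' volume a b) :
    ∫ t in a..b, (c - d * t) ^ s * f' t =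
      (c - d * b) ^ s * f b - (c - d * a) ^ s * f a +
        d * s * ∫ t in a..b, (c - d * t) ^ (s - 1) * f t := by
  have hweight : ∀ t ∈ Ioo (min a b) (max a b),
      HasDerivAt (fun t => (c - d * t) ^ s) (-(d * s) * (c - d * t) ^ (s - 1)) t := fun t ht => by
    have := (((hasDerivAt_id t).const_mul d).const_sub c).rpow_const (p := s) (Or.inl (hne t ht))
    exact this.congr_deriv (by simp only [id]; ring)
  rw [intervalIntegral.integral_mul_deriv_eq_deriv_mul_of_hasDerivAt
    (Continuous.rpow_const (by fun_prop) fun _ => Or.inr hs.le).continuousOn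
    (HasDerivAt.continuousOn hf) hweight (fun t ht => hf t (Ioo_subset_Icc_self ht))
    ((intervalIntegrable_sub_mul_rpow (by linarith)).const_mul _) hf']
  simp only [mul_assoc, intervalIntegral.integral_const_mul]
  ring

lemma intervalIntegrable_sub_mul_rpow_mul_eval (hs : -1 < s) (Q : ℝ[X]) :
    IntervalIntegrable (fun t => (c - d * t) ^ s * Q.eval t) volume a b :=
  (intervalIntegrable_sub_mul_rpow hs).mul_continuousOn Q.continuousOn

lemma integral_rpow_mul_derivative_eval (hs : 0 < s) (Q : ℝ[X]) :
    ∫ t in (-1 : ℝ)..1, (2 - 2 * t) ^ s * Q.derivative.eval t =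
      2 * s * (∫ t in (-1 : ℝ)..1, (2 - 2 * t) ^ (s - 1) * Q.eval t) -
        4 ^ s * Q.eval (-1) := by
  rw [integral_sub_mul_rpow_mul_deriv hs (fun t ht => ?_) (fun t _ => Q.hasDerivAt t)
    (Q.derivative.continuous.intervalIntegrable _ _)]
  · rw [mul_one, sub_self, Real.zero_rpow hs.ne', show (2 : ℝ) - 2 * -1 = 4 by norm_num]
    ring
  · have : t < 1 := by simpa using ht.2
    linarith

end WeightedIntegral

lemma four_rpow_half : (4 : ℝ) ^ (1 / 2 : ℝ) = 2 := by
  rw [← Real.sqrt_eq_rpow, show (4 : ℝ) = 2 ^ 2 by norm_num, Real.sqrt_sq two_pos.le]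

lemma four_rpow_three_halves : (4 : ℝ) ^ (3 / 2 : ℝ) = 8 := by
  rw [show (3 / 2 : ℝ) = 1 / 2 + 1 by norm_num, Real.rpow_add_one four_ne_zero, four_rpow_half]
  norm_num

namespace IsLegendre

variable {P : ℕ → ℝ[X]} (hP : IsLegendre P)
include hP

lemma isGegenbauer : IsGegenbauer (1 / 2) P := hP

lemma one_sub_X_mul_derivative_add_succ (n : ℕ) :
    (1 - X) * (P n + P (n + 1)).derivative = ((n : ℝ[X]) + 1) * (P n - P (n + 1)) := by
  rw [hP.isGegenbauer.one_sub_X_mul_derivative_add_succ, mul_one_div_cancel two_ne_zero, map_one]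
  ring

lemma one_add_X_mul_derivative_succ_sub (n : ℕ) :
    (1 + X) * (P (n + 1) - P n).derivative = ((n : ℝ[X]) + 1) * (P n + P (n + 1)) := by
  rw [hP.isGegenbauer.one_add_X_mul_derivative_succ_sub, mul_one_div_cancel two_ne_zero, map_one]
  ring

lemma eval_neg_one_succ (n : ℕ) : (P (n + 1)).eval (-1) = -(P n).eval (-1) := by
  have h := congrArg (Polynomial.eval (-1)) (hP.one_add_X_mul_derivative_succ_sub n)
  have hne : (n : ℝ) + 1 ≠ 0 := n.cast_add_one_ne_zero
  simp only [Polynomial.eval_mul, Polynomial.eval_add, Polynomial.eval_one, Polynomial.eval_X,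
    Polynomial.eval_natCast, add_neg_cancel, zero_mul] at h
  linarith [(mul_eq_zero.1 h.symm).resolve_left hne]

lemma eval_neg_one (n : ℕ) : (P n).eval (-1) = (-1) ^ n := by
  induction n with
  | zero => simp [hP.isGegenbauer.zero_eq]
  | succ n ih => rw [hP.eval_neg_one_succ, ih, pow_succ, mul_neg_one]

lemma derivative_eval_neg_one (n : ℕ) :
    (P n).derivative.eval (-1) = -(-1) ^ n * (n + 1).choose 2 := by
  induction n with
  | zero => simp [hP.isGegenbauer.zero_eq]
  | succ n ih =>
    have h := congrArg (Polynomial.eval (-1)) (hP.one_sub_X_mul_derivative_add_succ n)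
    simp only [Polynomial.derivative_add, Polynomial.eval_mul, Polynomial.eval_add,
      Polynomial.eval_sub, Polynomial.eval_one, Polynomial.eval_X, Polynomial.eval_natCast, ih,
      hP.eval_neg_one, pow_succ, Nat.cast_choose_two] at h
    rw [Nat.cast_choose_two, pow_succ]
    push_cast at h ⊢
    linear_combination h / 2

lemma integral_rpow_mul_eval_succ {s : ℝ} (hs : -1 < s) (n : ℕ) :
    (n + 2 + s) * ∫ t in (-1 : ℝ)..1, (2 - 2 * t) ^ s * (P (n + 1)).eval t =
      (n - s) * ∫ t in (-1 : ℝ)..1, (2 - 2 * t) ^ s * (P n).eval t := by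
  have hparts := integral_rpow_mul_derivative_eval (by linarith : 0 < s + 1) (P n + P (n + 1))
  have hweight : ∀ t ∈ [[(-1 : ℝ), 1]],
      (2 - 2 * t) ^ (s + 1) * (P n + P (n + 1)).derivative.eval t =
        2 * (n + 1) * ((2 - 2 * t) ^ s * (P n).eval t - (2 - 2 * t) ^ s * (P (n + 1)).eval t) := by
    intro t ht
    rw [uIcc_of_le (by norm_num)] at ht
    have h := congrArg (Polynomial.eval t) (hP.one_sub_X_mul_derivative_add_succ n)
    simp only [Polynomial.eval_mul, Polynomial.eval_sub, Polynomial.eval_X, Polynomial.eval_add,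
      Polynomial.eval_one, Polynomial.eval_natCast] at h
    rw [Real.rpow_add_one' (by linarith [ht.2]) (by linarith)]
    linear_combination 2 * (2 - 2 * t) ^ s * h
  have hint (m : ℕ) :
      IntervalIntegrable (fun t => (2 - 2 * t) ^ s * (P m).eval t) volume (-1) 1 :=
    intervalIntegrable_sub_mul_rpow_mul_eval hs (P m)
  rw [intervalIntegral.integral_congr hweight, intervalIntegral.integral_const_mul,
    intervalIntegral.integral_sub (hint n) (hint (n + 1)), add_sub_cancel_right] at hparts
  simp only [Polynomial.eval_add, mul_add, hP.eval_neg_one_succ,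
    intervalIntegral.integral_add (hint n) (hint (n + 1))] at hparts
  linear_combination -hparts / 2

lemma integral_rpow_neg_half_mul_eval (n : ℕ) :
    ∫ t in (-1 : ℝ)..1, (2 - 2 * t) ^ (-(1 / 2) : ℝ) * (P n).eval t = 2 / (2 * n + 1) := by
  induction n with
  | zero =>
    have h := integral_rpow_mul_derivative_eval one_half_pos (P 0)
    rw [four_rpow_half, hP.isGegenbauer.zero_eq,
      show (1 / 2 - 1 : ℝ) = -(1 / 2) by norm_num] at h
    simp only [Polynomial.derivative_one, Polynomial.eval_zero, mul_zero,
      intervalIntegral.integral_zero, Polynomial.eval_one] at h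
    rw [hP.isGegenbauer.zero_eq, Nat.cast_zero]
    simp only [Polynomial.eval_one]
    linear_combination -h
  | succ n ih =>
    have h := hP.integral_rpow_mul_eval_succ (by norm_num : (-1 : ℝ) < -(1 / 2)) n
    have hcancel : ((n : ℝ) - -(1 / 2)) * (2 / (2 * n + 1)) = 1 := by
      field_simp
      ring
    rw [ih, hcancel] at h
    rw [eq_div_iff (by positivity)]
    push_cast
    linear_combination 2 * h

end IsLegendre

theorem legendre_second_deriv_weighted_integral (P : ℕ → Polynomial ℝ) (hP : IsLegendre P)
    (k : ℕ) :
    ∫ t in (-1:ℝ)..1,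
        (2 - 2*t) ^ ((3:ℝ)/2) * (Polynomial.derivative (Polynomial.derivative (P k))).eval t =
      8 * (-1 : ℝ) ^ k * ((k + 1).choose 2 : ℝ) +
        3 * (2 * (-1 : ℝ) ^ (k + 1) + 2 / (2 * (k : ℝ) + 1)) := by
  have hfirst := integral_rpow_mul_derivative_eval (by norm_num : (0 : ℝ) < 3 / 2) (P k).derivative
  have hsecond := integral_rpow_mul_derivative_eval one_half_pos (P k)
  rw [show (3 / 2 - 1 : ℝ) = 1 / 2 by norm_num, four_rpow_three_halves,
    hP.derivative_eval_neg_one] at hfirst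
  rw [show (1 / 2 - 1 : ℝ) = -(1 / 2) by norm_num, four_rpow_half, hP.eval_neg_one,
    hP.integral_rpow_neg_half_mul_eval] at hsecond
  rw [hfirst, hsecond, pow_succ]
  ring
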